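/- Let c ∈ (0,1). There exist constants δ ∈ (0,1), ε₀ ∈ (0,1), α ∈ (0,1), and r ∈ (0,1/2] depending only on c with the following property. Let u be continuous and convex on Q̄ ∩ closure(B₁), twice continuously differentiable on Q ∩ B₁, and let f : Q ∩ B₁ → ℝ and φ : ∂Q ∩ B₁ → ℝ be such that u₁₁u₂₂ − u₁₂² = f in Q ∩ B₁ and u = φ on ∂Q ∩ B₁. If for some ε with 0 < ε ≤ ε₀ one has |u(x) − P_c^+(x)| ≤ ε for all x ∈ Q ∩ B₁, |f(x) − c| ≤ δε for all x ∈ Q ∩ B₁, and |φ(x) − q(x)| ≤ δε for all x ∈ ∂Q ∩ B₁, then |u(x) − P_c^+(x)| ≤ ε·r^{2+α} for all x ∈ Q ∩ B_r. -/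

import Mathlib

/-!
The proof is a comparison argument with an explicit barrier. Write `s = √(1 - c)`. The linearisation
of the Monge–Ampère operator at `Pplus c` is `L = ∂₁₁ + ∂₂₂ - 2s ∂₁₂`, and `L (x₁x₂) = -2s < 0`
because the mixed coefficient of `Pplus c` is positive. The quadratic form `h = x₁x₂ + (s/4)|x|²` is
therefore still a strict supersolution (`L h = -s`), and it is comparable to `|x|²` on the closed
quadrant. Since the inequality is strict, a power `hᵐ` with `m = 1 + s²/18` slightly above `1`
remains a supersolution, and it decays like `|x|^(2 + 2α)` with `α = s²/18`. Adding a small multiple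
`d h`, which makes the inequality uniformly strict up to the origin, and a constant `δ`, which
absorbs the boundary error, gives the barrier `ψ = K hᵐ + d h + δ` (`psi`, `psi_hess`). Here `K` makes
`ψ ≥ 1` on the circle of radius `1/2`, then `r`, and finally `d` and `δ`, are chosen so small that
`ψ ≤ r^(2 + α)` on the quarter disc of radius `r`.

The Hessian of `ψ` is bounded, so for small `ε` the error `ε² det D²ψ` is harmless and
`det D²(Pplus c ± εψ)` lies strictly below, respectively above, every admissible `f` (`det_upper`,
`det_lower`). On the boundary of the quarter disc of radius `1/2` one has `|u - Pplus c| ≤ εψ`. At an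
interior maximum of `u - (Pplus c + εψ)` the Hessians would be ordered, `0 ≤ D²u ≤ D²(Pplus c + εψ)`
by convexity of `u`, and monotonicity of the determinant (`det_mono`) would contradict the
inequality for the determinants; likewise from below. Hence `|u - Pplus c| ≤ εψ` throughout
(`max_principle`), which on the disc of radius `r` is the claim.

Hessians enter only through second derivatives along lines (`HasLineHess`).
-/

noncomputable section

open Set Metric

/-- The Euclidean plane ℝ². -/
abbrev E2 : Type := EuclideanSpace ℝ (Fin 2)

/-- First partial derivative ∂_i. -/
def pd (i : Fin 2) (f : E2 → ℝ) : E2 → ℝ := fun x => fderiv ℝ f x (EuclideanSpace.single i 1)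

/-- Second partial derivative ∂_i ∂_j. -/
def pd2 (i j : Fin 2) (f : E2 → ℝ) : E2 → ℝ := pd i (pd j f)

/-- The open first quadrant Q. -/
def Qset : Set E2 := {x | 0 < x 0 ∧ 0 < x 1}

/-- q(x) = |x|²/2. -/
def qfun (x : E2) : ℝ := ‖x‖ ^ 2 / 2

/-- The Monge–Ampère operator det D²u = u₁₁ u₂₂ − u₁₂². -/
def MA (u : E2 → ℝ) (x : E2) : ℝ := pd2 0 0 u x * pd2 1 1 u x - (pd2 0 1 u x) ^ 2

/-- P_c^+(x) = ½x₁² + ½x₂² + √(1−c) x₁x₂. -/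
def Pplus (c : ℝ) (x : E2) : ℝ := x 0 ^ 2 / 2 + x 1 ^ 2 / 2 + Real.sqrt (1 - c) * (x 0 * x 1)

/-- P_c^-(x) = ½x₁² + ½x₂² − √(1−c) x₁x₂. -/
def Pminus (c : ℝ) (x : E2) : ℝ := x 0 ^ 2 / 2 + x 1 ^ 2 / 2 - Real.sqrt (1 - c) * (x 0 * x 1)

/-- β_c^- = π / arccos(−√(1−c)). -/
def betam (c : ℝ) : ℝ := Real.pi / Real.arccos (-(Real.sqrt (1 - c)))

/-- A global solution (without the sign condition u ≥ 0): u is continuous and convex on Q̄,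
smooth in Q, its first and second partial derivatives extend continuously to Q̄ \ {0},
det D²u = c in Q, and u = q on ∂Q. -/
structure IsGlobalSolutionNS (c : ℝ) (u : E2 → ℝ) : Prop where
  cont : ContinuousOn u (closure Qset)
  conv : ConvexOn ℝ (closure Qset) u
  smooth : ContDiffOn ℝ (⊤ : ℕ∞) u Qset
  ext1 : ∀ i : Fin 2, ∃ g : E2 → ℝ, ContinuousOn g (closure Qset \ {0}) ∧ ∀ x ∈ Qset, g x = pd i u x
  ext2 : ∀ i j : Fin 2, ∃ g : E2 → ℝ, ContinuousOn g (closure Qset \ {0}) ∧ ∀ x ∈ Qset, g x = pd2 i j u x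
  ma : ∀ x ∈ Qset, MA u x = c
  bdry : ∀ x ∈ frontier Qset, u x = qfun x

/-- A global solution: additionally u ≥ 0 on Q̄. -/
structure IsGlobalSolution (c : ℝ) (u : E2 → ℝ) extends IsGlobalSolutionNS c u : Prop where
  nonneg : ∀ x ∈ closure Qset, 0 ≤ u x

/-! ### Second derivatives along lines -/

/-- `g` is twice differentiable at `x` along every line through `x`, with second derivative given
by the quadratic form with coefficients `A = g₁₁`, `B = g₁₂`, `C = g₂₂`. -/
def HasLineHess (g : E2 → ℝ) (x : E2) (A B C : ℝ) : Prop :=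
  ∀ v : E2, ∃ g' : ℝ → ℝ, (∀ᶠ t in nhds (0:ℝ), HasDerivAt (fun t => g (x + t • v)) (g' t) t) ∧
    HasDerivAt g' (A * v 0 ^ 2 + 2 * B * (v 0 * v 1) + C * v 1 ^ 2) 0

/-- The necessary second-order condition at a local maximum: if the second derivative were
positive, the point would also be a local minimum, so the function would be locally constant. -/
lemma second_test {g g' : ℝ → ℝ} {s : ℝ} (h1 : ∀ᶠ t in nhds (0:ℝ), HasDerivAt g (g' t) t)
    (h2 : HasDerivAt g' s 0) (hmax : IsLocalMax g 0) : s ≤ 0 := by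
  by_contra! hs
  have hd : deriv g =ᶠ[nhds 0] g' := h1.mono fun t ht => ht.deriv
  have hdd : deriv (deriv g) 0 = s := by rw [hd.deriv_eq]; exact h2.deriv
  have hmin : IsLocalMin g 0 :=
    isLocalMin_of_deriv_deriv_pos (by rw [hdd]; exact hs) hmax.deriv_eq_zero
      h1.self_of_nhds.continuousAt
  have hconst : g =ᶠ[nhds 0] fun _ => g 0 := by
    filter_upwards [hmax, hmin] with t h h' using le_antisymm h h'
  have h0 : deriv g =ᶠ[nhds 0] fun _ => 0 := by
    filter_upwards [hconst.eventuallyEq_nhds] with t ht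
    rw [ht.deriv_eq]; simp
  have : deriv (deriv g) 0 = 0 := by rw [h0.deriv_eq]; simp
  linarith

lemma vec_eq (v : E2) :
    v = v 0 • EuclideanSpace.single (0 : Fin 2) (1:ℝ)
      + v 1 • EuclideanSpace.single (1 : Fin 2) (1:ℝ) := by
  ext i; fin_cases i <;> simp

lemma hasLineHess_of_contDiffAt {u : E2 → ℝ} {x : E2} (hu : ContDiffAt ℝ 2 u x) :
    HasLineHess u x (pd2 0 0 u x) (pd2 0 1 u x) (pd2 1 1 u x) := by
  intro v
  have hF : DifferentiableAt ℝ (fderiv ℝ u) x :=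
    (hu.fderiv_right (m := 1) (by norm_num)).differentiableAt (by norm_num)
  have hp : ∀ i j, pd2 i j u x = fderiv ℝ (fderiv ℝ u) x (EuclideanSpace.single i 1)
      (EuclideanSpace.single j 1) := by
    intro i j
    have : pd j u = fun y => fderiv ℝ u y (EuclideanSpace.single j 1) := rfl
    simp only [pd2, this]
    simp only [pd]
    rw [fderiv_clm_apply hF (differentiableAt_const _)]
    simp
  have hsymm : IsSymmSndFDerivAt ℝ u x := hu.isSymmSndFDerivAt (by simp)
  have hl : ∀ t : ℝ, HasDerivAt (fun t : ℝ => x + t • v) v t := by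
    intro t
    simpa using ((hasDerivAt_id t).smul_const v).const_add x
  refine ⟨fun t => fderiv ℝ u (x + t • v) v, ?_, ?_⟩
  · have hd : ∀ᶠ y in nhds x, DifferentiableAt ℝ u y :=
      (hu.eventually (by simp)).mono fun y hy => hy.differentiableAt (by norm_num)
    have hc : Filter.Tendsto (fun t : ℝ => x + t • v) (nhds 0) (nhds x) := by
      simpa using (hl 0).continuousAt.tendsto
    filter_upwards [hc.eventually hd] with t ht
    exact ht.hasFDerivAt.comp_hasDerivAt t (hl t)
  · have hF' : HasFDerivAt (fderiv ℝ u) (fderiv ℝ (fderiv ℝ u) x) (x + (0:ℝ) • v) := by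
      simpa using hF.hasFDerivAt
    have h := (ContinuousLinearMap.apply ℝ ℝ v).hasFDerivAt.comp_hasDerivAt (0:ℝ)
      (hF'.comp_hasDerivAt 0 (hl 0))
    refine h.congr_deriv ?_
    have hs := hsymm.eq (EuclideanSpace.single 0 1) (EuclideanSpace.single 1 1)
    rw [hp, hp, hp]
    have hv : fderiv ℝ (fderiv ℝ u) x v v = fderiv ℝ (fderiv ℝ u) x
      (v 0 • EuclideanSpace.single (0 : Fin 2) (1:ℝ) + v 1 • EuclideanSpace.single (1 : Fin 2) (1:ℝ))
      (v 0 • EuclideanSpace.single (0 : Fin 2) (1:ℝ) + v 1 • EuclideanSpace.single (1 : Fin 2) (1:ℝ)) := by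
      rw [← vec_eq v]
    rw [ContinuousLinearMap.apply_apply, hv]
    simp only [map_add, map_smul, add_apply, FunLike.coe_smul, Pi.smul_apply,
      smul_eq_mul, hs]
    ring

lemma line_tendsto (x v : E2) : Filter.Tendsto (fun t : ℝ => x + t • v) (nhds 0) (nhds x) := by
  have : ContinuousAt (fun t : ℝ => x + t • v) 0 := by fun_prop
  simpa using this.tendsto

lemma form_le_of_isLocalMax {u w : E2 → ℝ} {x : E2} {A B C A' B' C' : ℝ}
    (hu : HasLineHess u x A B C) (hw : HasLineHess w x A' B' C')
    (hmax : IsLocalMax (fun y => u y - w y) x) (p q : ℝ) :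
    0 ≤ (A' - A) * p ^ 2 + 2 * (B' - B) * (p * q) + (C' - C) * q ^ 2 := by
  obtain ⟨g, hg1, hg2⟩ := hu !₂[p, q]
  obtain ⟨k, hk1, hk2⟩ := hw !₂[p, q]
  have hm : IsLocalMax (fun t : ℝ => u (x + t • !₂[p, q]) - w (x + t • !₂[p, q])) 0 := by
    have := (line_tendsto x !₂[p, q]).eventually hmax
    simpa [IsLocalMax, IsMaxFilter] using this
  have := second_test (g' := fun t => g t - k t)
    (by filter_upwards [hg1, hk1] with t h h' using h.sub h') (hg2.sub hk2) hm
  simp at this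
  linarith

/-- Convexity makes the second difference `g (x + t v) + g (x - t v)` minimal at `t = 0`. -/
lemma form_nonneg_of_convexOn {u : E2 → ℝ} {x : E2} {S : Set E2} {A B C : ℝ}
    (hu : HasLineHess u x A B C) (hS : S ∈ nhds x) (hc : ConvexOn ℝ S u) (p q : ℝ) :
    0 ≤ A * p ^ 2 + 2 * B * (p * q) + C * q ^ 2 := by
  obtain ⟨g, hg1, hg2⟩ := hu !₂[p, q]
  set v : E2 := !₂[p, q] with hv
  have hneg : Filter.Tendsto (fun t : ℝ => -t) (nhds 0) (nhds 0) := by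
    simpa using (continuous_neg (G := ℝ)).tendsto 0
  have hm : IsLocalMax (fun t : ℝ => -(u (x + t • v) + u (x + (-t) • v))) 0 := by
    filter_upwards [(line_tendsto x v).eventually hS,
      hneg.eventually ((line_tendsto x v).eventually hS)] with t h1 h2
    have h := hc.2 h1 h2 (by norm_num : (0:ℝ) ≤ 1 / 2) (by norm_num : (0:ℝ) ≤ 1 / 2)
      (by norm_num)
    have e : (1/2 : ℝ) • (x + t • v) + (1/2 : ℝ) • (x + (-t) • v) = x := by module
    rw [e] at h
    simp only [smul_eq_mul] at h
    simp only [zero_smul, neg_zero, add_zero]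
    linarith
  have := second_test (g' := fun t => -(g t + -g (-t))) ?_ ?_ hm
    (s := -(2 * (A * p ^ 2 + 2 * B * (p * q) + C * q ^ 2)))
  · linarith
  · filter_upwards [hg1, hneg.eventually hg1] with t h h'
    have h'' := h'.scomp t (hasDerivAt_neg t)
    refine ((h.add h'').neg.congr_of_eventuallyEq (.of_forall fun y => ?_)).congr_deriv (by simp)
    simp
  · have hg2' : HasDerivAt g (A * v 0 ^ 2 + 2 * B * (v 0 * v 1) + C * v 1 ^ 2) (-0) := by
      rw [neg_zero]; exact hg2
    have := (hg2.add ((hg2'.scomp (0:ℝ) (hasDerivAt_neg (0:ℝ))).neg)).neg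
    refine this.congr_deriv ?_
    simp [hv]
    ring

/-! ### Determinants of nonnegative quadratic forms -/

lemma psd_of_form {A B C : ℝ} (h : ∀ p q : ℝ, 0 ≤ A * p ^ 2 + 2 * B * (p * q) + C * q ^ 2) :
    0 ≤ A ∧ 0 ≤ C ∧ B ^ 2 ≤ A * C := by
  have hA : 0 ≤ A := by simpa using h 1 0
  have hC : 0 ≤ C := by simpa using h 0 1
  refine ⟨hA, hC, ?_⟩
  rcases hA.eq_or_lt with hA0 | hA0
  · -- with `A = 0` the form is affine in `p`, which forces `B = 0`
    have h1 := h (-(C + 1) * B) 2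
    rw [← hA0] at h1 ⊢
    have : B ^ 2 ≤ 0 := by
      by_contra! hB
      nlinarith [h (-(C + 1)) B, h (C+1) B, mul_nonneg hC hB.le]
    linarith
  · have h1 := h (-B) A
    have : 0 ≤ A * (A * C - B ^ 2) := by linarith
    have := nonneg_of_mul_nonneg_right this hA0
    linarith

/-- Monotonicity of the determinant on nonnegative symmetric matrices. -/
lemma det_mono {A B C A' B' C' : ℝ}
    (h : ∀ p q : ℝ, 0 ≤ A * p ^ 2 + 2 * B * (p * q) + C * q ^ 2)
    (hN : ∀ p q : ℝ, 0 ≤ (A' - A) * p ^ 2 + 2 * (B' - B) * (p * q) + (C' - C) * q ^ 2) :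
    A * C - B ^ 2 ≤ A' * C' - B' ^ 2 := by
  obtain ⟨hA, hC, hB⟩ := psd_of_form h
  obtain ⟨hA', hC', hB'⟩ := psd_of_form hN
  -- the mixed term of `det (M + N)` is nonnegative, `M` and `N` being the two given forms
  have key : 2 * (B * (B' - B)) ≤ A * (C' - C) + C * (A' - A) := by
    apply le_of_sq_le_sq _ (by positivity)
    have h1 : (B * (B' - B)) ^ 2 ≤ (A * C) * ((A' - A) * (C' - C)) := by
      rw [mul_pow]; exact mul_le_mul hB hB' (sq_nonneg _) (by positivity)
    nlinarith [sq_nonneg (A * (C' - C) - C * (A' - A))]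
  nlinarith

/-! ### The barrier -/

/-- The quadratic form `x₁x₂ + η|x|²`, for `η > 0` positive on the closed quadrant minus the origin. -/
def hq (η : ℝ) (x : E2) : ℝ := x 0 * x 1 + η * (x 0 ^ 2 + x 1 ^ 2)

/-- The barrier `K hᵐ + d h + δ`, where `h = hq η`. -/
def psi (η K m d δ : ℝ) (x : E2) : ℝ := K * hq η x ^ m + d * hq η x + δ

/-- The second derivative `∂₁∂₁` of `psi`. -/
def psi00 (η K m d : ℝ) (x : E2) : ℝ :=
  K * m * (hq η x ^ (m - 1) * (2 * η) + (m - 1) * hq η x ^ (m - 2) * (x 1 + 2 * η * x 0) ^ 2)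
    + d * (2 * η)

/-- The second derivative `∂₁∂₂` of `psi`. -/
def psi01 (η K m d : ℝ) (x : E2) : ℝ :=
  K * m * (hq η x ^ (m - 1) + (m - 1) * hq η x ^ (m - 2) *
    ((x 1 + 2 * η * x 0) * (x 0 + 2 * η * x 1))) + d

/-- The second derivative `∂₂∂₂` of `psi`. -/
def psi11 (η K m d : ℝ) (x : E2) : ℝ :=
  K * m * (hq η x ^ (m - 1) * (2 * η) + (m - 1) * hq η x ^ (m - 2) * (x 0 + 2 * η * x 1) ^ 2)
    + d * (2 * η)

lemma hasLineHess_barrier (c σ η K m d δ : ℝ) {x : E2} (hx : 0 < hq η x) :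
    HasLineHess (fun y => Pplus c y + σ * psi η K m d δ y) x (1 + σ * psi00 η K m d x)
      (√(1 - c) + σ * psi01 η K m d x) (1 + σ * psi11 η K m d x) := by
  intro v
  set s := √(1 - c) with hs
  set b : ℝ := (x 1 + 2 * η * x 0) * v 0 + (x 0 + 2 * η * x 1) * v 1 with hb
  set H : ℝ → ℝ := fun t => hq η x + t * b + t ^ 2 * hq η v with hH
  have hline : ∀ t : ℝ, hq η (x + t • v) = H t := by
    intro t; simp [hH, hb, hq]; ring
  have hder : ∀ t : ℝ, HasDerivAt H (b + 2 * t * hq η v) t := by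
    intro t
    have := (((hasDerivAt_id t).mul_const b).const_add (hq η x)).add
      ((hasDerivAt_pow 2 t).mul_const (hq η v))
    refine this.congr_deriv ?_
    simp
  have hpos : ∀ᶠ t in nhds (0:ℝ), 0 < H t :=
    (hder 0).continuousAt.eventually (lt_mem_nhds (by simpa [hH] using hx))
  have hP : ∀ t : ℝ, Pplus c (x + t • v) =
      Pplus c x + t * (x 0 * v 0 + x 1 * v 1 + s * (x 0 * v 1 + x 1 * v 0)) +
        t ^ 2 * Pplus c v := by
    intro t; simp [Pplus, ← hs]; ring
  refine ⟨fun t => (x 0 * v 0 + x 1 * v 1 + s * (x 0 * v 1 + x 1 * v 0)) + 2 * t * Pplus c v +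
    σ * (K * ((b + 2 * t * hq η v) * m * H t ^ (m - 1)) + d * (b + 2 * t * hq η v)), ?_, ?_⟩
  · filter_upwards [hpos] with t ht
    have h1 := (hder t).rpow_const (p := m) (Or.inl ht.ne')
    have h2 := (((hasDerivAt_id t).mul_const
      (x 0 * v 0 + x 1 * v 1 + s * (x 0 * v 1 + x 1 * v 0))).const_add (Pplus c x)).add
      ((hasDerivAt_pow 2 t).mul_const (Pplus c v))
    have h3 := h2.add ((((h1.const_mul K).add ((hder t).const_mul d)).add_const δ).const_mul σ)
    refine (h3.congr_of_eventuallyEq (.of_forall fun y => ?_)).congr_deriv ?_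
    · simp only [hP, psi, hline, Pi.add_apply, id]
    · simp
  · have h0 : H 0 = hq η x := by simp [hH]
    have hlin : ∀ k : ℝ, HasDerivAt (fun t : ℝ => 2 * t * k) (2 * k) 0 := by
      intro k
      simpa using ((hasDerivAt_id (0:ℝ)).const_mul 2).mul_const k
    have hb' := (hlin (hq η v)).const_add b
    have h1 := (hder 0).rpow_const (p := m - 1) (Or.inl (by rw [h0]; exact hx.ne'))
    have h2 := ((hlin (Pplus c v)).const_add
      (x 0 * v 0 + x 1 * v 1 + s * (x 0 * v 1 + x 1 * v 0))).add
      (((((hb'.mul_const m).mul h1).const_mul K).add (hb'.const_mul d)).const_mul σ)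
    refine h2.congr_deriv ?_
    rw [h0, show m - 1 - 1 = m - 2 by ring]
    simp only [mul_zero, zero_mul, add_zero]
    simp only [psi00, psi01, psi11, hb, Pplus, ← hs]
    generalize hq η x ^ (m - 1) = T
    generalize hq η x ^ (m - 2) = R
    simp only [hq]
    ring

/-! ### Estimates for the barrier -/

lemma norm_sq_coords (x : E2) : ‖x‖ ^ 2 = x 0 ^ 2 + x 1 ^ 2 := by
  rw [EuclideanSpace.real_norm_sq_eq, Fin.sum_univ_two]

lemma hq_lower {η : ℝ} {x : E2} (h0 : 0 ≤ x 0) (h1 : 0 ≤ x 1) : η * ‖x‖ ^ 2 ≤ hq η x := by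
  rw [norm_sq_coords, hq]
  nlinarith [mul_nonneg h0 h1]

lemma hq_upper {η : ℝ} (hη : η ≤ 1 / 4) (x : E2) : hq η x ≤ ‖x‖ ^ 2 := by
  rw [norm_sq_coords, hq]
  nlinarith [sq_nonneg (x 0 - x 1), sq_nonneg (x 0), sq_nonneg (x 1)]

lemma hq_pos {s : ℝ} (hs : 0 < s) {x : E2} (hx : x ∈ Qset) : 0 < hq (s / 4) x := by
  obtain ⟨h0, h1⟩ := hx
  unfold hq; positivity

/-- The exponent exceeds `1` by so little that the gradient term of the linearised operator
`∂₁₁ + ∂₂₂ - 2s ∂₁₂` applied to `hᵐ` is absorbed by the term coming from `x₁x₂`; the quadratic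
term `d h` then gives strictness up to the origin. -/
lemma psi_hess {s K d : ℝ} (hs0 : 0 < s) (hs1 : s < 1) (hK : 0 ≤ K) (hd0 : 0 ≤ d) (hd1 : d ≤ 1)
    {x : E2} (hx : x ∈ Qset) (hx1 : ‖x‖ ≤ 1) :
    (0 ≤ psi00 (s / 4) K (1 + s ^ 2 / 18) d x ∧ psi00 (s / 4) K (1 + s ^ 2 / 18) d x ≤ 3 * K + 1) ∧
    (0 ≤ psi11 (s / 4) K (1 + s ^ 2 / 18) d x ∧ psi11 (s / 4) K (1 + s ^ 2 / 18) d x ≤ 3 * K + 1) ∧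
    (0 ≤ psi01 (s / 4) K (1 + s ^ 2 / 18) d x ∧ psi01 (s / 4) K (1 + s ^ 2 / 18) d x ≤ 3 * K + 1) ∧
    psi00 (s / 4) K (1 + s ^ 2 / 18) d x + psi11 (s / 4) K (1 + s ^ 2 / 18) d x
      - 2 * s * psi01 (s / 4) K (1 + s ^ 2 / 18) d x ≤ -(s * d) := by
  have hh := hq_pos hs0 hx
  have hh1 : hq (s / 4) x ≤ 1 :=
    (hq_upper (by linarith) x).trans (by nlinarith [norm_nonneg x])
  obtain ⟨h0, h1⟩ := hx
  have hlow : s / 4 * (x 0 ^ 2 + x 1 ^ 2) ≤ hq (s / 4) x := by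
    rw [← norm_sq_coords]; exact hq_lower h0.le h1.le
  have hss : 0 < s ^ 2 := by positivity
  have hss1 : s ^ 2 < 1 := by nlinarith
  have hTR : hq (s / 4) x ^ (1 + s ^ 2 / 18 - 2) * hq (s / 4) x
      = hq (s / 4) x ^ (1 + s ^ 2 / 18 - 1) := by
    rw [← Real.rpow_add_one hh.ne']; congr 1; ring
  have hT1 : hq (s / 4) x ^ (1 + s ^ 2 / 18 - 1) ≤ 1 :=
    Real.rpow_le_one hh.le hh1 (by linarith)
  have hT0 : 0 < hq (s / 4) x ^ (1 + s ^ 2 / 18 - 1) := Real.rpow_pos_of_pos hh _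
  have hR0 : 0 < hq (s / 4) x ^ (1 + s ^ 2 / 18 - 2) := Real.rpow_pos_of_pos hh _
  simp only [psi00, psi11, psi01]
  generalize hq (s / 4) x ^ (1 + s ^ 2 / 18 - 2) = R at *
  generalize hq (s / 4) x ^ (1 + s ^ 2 / 18 - 1) = T at *
  generalize hq (s / 4) x = h at *
  set a := x 1 + 2 * (s / 4) * x 0 with ha
  set b := x 0 + 2 * (s / 4) * x 1 with hb
  have ha0 : 0 < a := by positivity
  have hb0 : 0 < b := by positivity
  have hgrad : s * (a ^ 2 + b ^ 2) ≤ 9 * h := by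
    have : a ^ 2 + b ^ 2 ≤ 9 / 4 * (x 0 ^ 2 + x 1 ^ 2) := by
      have e : a ^ 2 + b ^ 2 = (1 + s ^ 2 / 4) * (x 0 ^ 2 + x 1 ^ 2) + 2 * s * (x 0 * x 1) := by
        rw [ha, hb]; ring
      rw [e]
      nlinarith [sq_nonneg (x 0 - x 1), mul_pos h0 h1, sq_nonneg (x 0), sq_nonneg (x 1)]
    nlinarith
  have hm : 1 + s ^ 2 / 18 - 1 = s ^ 2 / 18 := by ring
  rw [hm]
  set Y := s ^ 2 / 18 * R with hY
  have hY0 : 0 < Y := by positivity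
  have hYb : Y * (a ^ 2 + b ^ 2) ≤ s / 2 * T := by
    rw [← hTR, hY]
    have := mul_le_mul_of_nonneg_left hgrad (by positivity : 0 ≤ s / 18 * R)
    linarith
  have hYa : 0 < Y * a ^ 2 := by positivity
  have hYb' : 0 < Y * b ^ 2 := by positivity
  have hYab : 0 < Y * (a * b) := by positivity
  have hYab2 : 2 * (Y * (a * b)) ≤ Y * (a ^ 2 + b ^ 2) := by nlinarith [sq_nonneg (a - b)]
  have hKm : 0 ≤ K * (1 + s ^ 2 / 18) := by positivity
  have hKm2 : K * (1 + s ^ 2 / 18) ≤ K * 2 := by gcongr; linarith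
  have hsT : s * T ≤ 1 := by nlinarith
  have hsT0 : 0 < s * T := by positivity
  have bound : ∀ z : ℝ, z ≤ 3 / 2 → 0 ≤ z → K * (1 + s ^ 2 / 18) * z ≤ 3 * K := by
    intro z hz hz0
    calc K * (1 + s ^ 2 / 18) * z ≤ K * 2 * (3 / 2) := by gcongr
      _ = 3 * K := by ring
  have hds : d * (2 * (s / 4)) ≤ 1 := by
    calc d * (2 * (s / 4)) ≤ 1 * 1 := by gcongr; linarith
      _ = 1 := one_mul 1
  refine ⟨⟨by positivity, ?_⟩, ⟨by positivity, ?_⟩, ⟨by positivity, ?_⟩, ?_⟩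
  · have := bound (T * (2 * (s / 4)) + Y * a ^ 2) (by linarith) (by positivity)
    linarith
  · have := bound (T * (2 * (s / 4)) + Y * b ^ 2) (by linarith) (by positivity)
    linarith
  · have := bound (T + Y * (a * b)) (by linarith) (by positivity)
    linarith
  · have key : T * (2 * (s / 4)) + Y * a ^ 2 + (T * (2 * (s / 4)) + Y * b ^ 2)
        - 2 * s * (T + Y * (a * b)) ≤ 0 := by
      have := mul_pos hs0 hYab
      linarith
    have := mul_nonpos_of_nonneg_of_nonpos hKm key
    linarith

/-! ### Comparison on the quarter disc -/

lemma isOpen_Qset : IsOpen Qset := by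
  have : Qset = {x : E2 | 0 < x 0} ∩ {x : E2 | 0 < x 1} := rfl
  rw [this]
  exact (isOpen_lt (by fun_prop) (by fun_prop)).inter (isOpen_lt (by fun_prop) (by fun_prop))

lemma nonneg_of_mem_closure {x : E2} (hx : x ∈ closure Qset) : 0 ≤ x 0 ∧ 0 ≤ x 1 := by
  have hc : IsClosed ({x : E2 | 0 ≤ x 0} ∩ {x : E2 | 0 ≤ x 1}) :=
    (isClosed_le (by fun_prop) (by fun_prop)).inter (isClosed_le (by fun_prop) (by fun_prop))
  have hsub : Qset ⊆ {x : E2 | 0 ≤ x 0} ∩ {x : E2 | 0 ≤ x 1} := fun y hy => ⟨hy.1.le, hy.2.le⟩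
  exact closure_minimal hsub hc hx

lemma mul_eq_zero_of_mem_frontier {x : E2} (hx : x ∈ frontier Qset) : x 0 * x 1 = 0 := by
  rw [isOpen_Qset.frontier_eq] at hx
  obtain ⟨h0, h1⟩ := nonneg_of_mem_closure hx.1
  by_contra h
  have h' := mul_ne_zero_iff.1 h
  exact hx.2 ⟨lt_of_le_of_ne h0 h'.1.symm, lt_of_le_of_ne h1 h'.2.symm⟩

lemma max_principle {g : E2 → ℝ} (hc : ContinuousOn g (closure Qset ∩ closedBall (0:E2) (1/2)))
    (hint : ∀ x ∈ Qset ∩ ball (0:E2) (1/2), ¬ IsLocalMax g x)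
    (hsph : ∀ x ∈ closure Qset, ‖x‖ = 1/2 → g x ≤ 0)
    (hbd : ∀ x ∈ frontier Qset, ‖x‖ < 1/2 → g x ≤ 0) :
    ∀ x ∈ Qset ∩ ball (0:E2) (1/2), g x ≤ 0 := by
  intro x hx
  have hK : IsCompact (closure Qset ∩ closedBall (0:E2) (1/2)) :=
    (isCompact_closedBall _ _).inter_left isClosed_closure
  have hsub : Qset ∩ ball (0:E2) (1/2) ⊆ closure Qset ∩ closedBall (0:E2) (1/2) :=
    inter_subset_inter subset_closure ball_subset_closedBall
  obtain ⟨y, hy, hmax⟩ := hK.exists_isMaxOn ⟨x, hsub hx⟩ hc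
  refine (hmax (hsub hx)).trans ?_
  rcases (mem_closedBall_zero_iff.1 hy.2).eq_or_lt with h | h
  · exact hsph y hy.1 h
  by_cases hyQ : y ∈ Qset
  · have hyb : y ∈ Qset ∩ ball (0:E2) (1/2) := ⟨hyQ, mem_ball_zero_iff.2 h⟩
    exact absurd (hmax.isLocalMax (Filter.mem_of_superset
      ((isOpen_Qset.inter isOpen_ball).mem_nhds hyb) hsub)) (hint y hyb)
  · exact hbd y (by rw [isOpen_Qset.frontier_eq]; exact ⟨hy.1, hyQ⟩) h

lemma continuous_psi {η K m d δ : ℝ} (hm : 0 ≤ m) : Continuous (psi η K m d δ) := by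
  have h : Continuous (hq η) := by unfold hq; fun_prop
  exact ((continuous_const.mul (h.rpow_const fun _ => Or.inr hm)).add
    (continuous_const.mul h)).add continuous_const

lemma continuous_Pplus (c : ℝ) : Continuous (Pplus c) := by unfold Pplus; fun_prop

lemma convex_Qset : Convex ℝ Qset := by
  have : Qset = {x : E2 | 0 < x 0} ∩ {x : E2 | 0 < x 1} := rfl
  rw [this]
  have h (i : Fin 2) : IsLinearMap ℝ fun x : E2 => x i :=
    (EuclideanSpace.proj (𝕜 := ℝ) i).isBoundedLinearMap.toIsLinearMap
  exact (convex_halfSpace_gt (h 0) 0).inter (convex_halfSpace_gt (h 1) 0)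

/-- The supersolution inequality survives the quadratic error `ε² det D²ψ`. -/
lemma det_upper {c s d M ε a b e : ℝ} (ha0 : 0 ≤ a) (ha : a ≤ M) (hb0 : 0 ≤ b) (hb : b ≤ M)
    (hL : a + b - 2 * s * e ≤ -(s * d)) (hε : 0 < ε) (hsd : 0 < s * d)
    (hεM : ε * M ^ 2 ≤ s * d / 4) (hs : s ^ 2 = 1 - c) :
    (1 + ε * a) * (1 + ε * b) - (s + ε * e) ^ 2 < c - s * d / 4 * ε := by
  have h1 : a * b - e ^ 2 ≤ M ^ 2 := by nlinarith [mul_le_mul ha hb hb0 (ha0.trans ha)]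
  have h2 : a + b - 2 * s * e + ε * (a * b - e ^ 2) < -(s * d / 4) := by
    linarith [mul_le_mul_of_nonneg_left h1 hε.le]
  have h3 := mul_lt_mul_of_pos_left h2 hε
  have e1 : (1 + ε * a) * (1 + ε * b) - (s + ε * e) ^ 2
      = 1 - s ^ 2 + ε * (a + b - 2 * s * e + ε * (a * b - e ^ 2)) := by ring
  rw [e1, hs]
  linarith

/-- The subsolution counterpart of `det_upper`. -/
lemma det_lower {c s d M ε a b e : ℝ} (ha0 : 0 ≤ a) (ha : a ≤ M) (hb0 : 0 ≤ b)
    (he0 : 0 ≤ e) (he : e ≤ M) (hL : a + b - 2 * s * e ≤ -(s * d)) (hε : 0 < ε) (hsd : 0 < s * d)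
    (hεM : ε * M ^ 2 ≤ s * d / 4) (hs : s ^ 2 = 1 - c) :
    c + s * d / 4 * ε < (1 + -ε * a) * (1 + -ε * b) - (s + -ε * e) ^ 2 := by
  have h1 : -M ^ 2 ≤ a * b - e ^ 2 := by nlinarith [mul_nonneg ha0 hb0]
  have h2 : a + b - 2 * s * e - ε * (a * b - e ^ 2) < -(s * d / 4) := by
    linarith [mul_le_mul_of_nonneg_left h1 hε.le]
  have h3 := mul_lt_mul_of_pos_left h2 hε
  have e1 : (1 + -ε * a) * (1 + -ε * b) - (s + -ε * e) ^ 2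
      = 1 - s ^ 2 - ε * (a + b - 2 * s * e - ε * (a * b - e ^ 2)) := by ring
  rw [e1, hs]
  linarith

/-- The Sylvester criterion in dimension two. -/
lemma form_nonneg_of_det {A B C : ℝ} (hA : 0 < A) (h : 0 ≤ A * C - B ^ 2) (p q : ℝ) :
    0 ≤ A * p ^ 2 + 2 * B * (p * q) + C * q ^ 2 := by
  have : 0 ≤ A * (A * p ^ 2 + 2 * B * (p * q) + C * q ^ 2) := by
    nlinarith [sq_nonneg (A * p + B * q), mul_nonneg h (sq_nonneg q)]
  exact nonneg_of_mul_nonneg_right this hA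

/-! ### The improvement of flatness -/

/-- Pointwise improvement of flatness near P_c^+: Proposition on the quarter ball. -/
theorem stmt8 (c : ℝ) (hc : c ∈ Set.Ioo (0:ℝ) 1) :
    ∃ δ ∈ Set.Ioo (0:ℝ) 1, ∃ ε₀ ∈ Set.Ioo (0:ℝ) 1, ∃ α ∈ Set.Ioo (0:ℝ) 1,
      ∃ r ∈ Set.Ioc (0:ℝ) (1/2),
      ∀ u f φ : E2 → ℝ,
        ContinuousOn u (closure Qset ∩ closure (ball (0:E2) 1)) →
        ConvexOn ℝ (closure Qset ∩ closure (ball (0:E2) 1)) u →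
        ContDiffOn ℝ 2 u (Qset ∩ ball (0:E2) 1) →
        (∀ x ∈ Qset ∩ ball (0:E2) 1, MA u x = f x) →
        (∀ x ∈ frontier Qset ∩ ball (0:E2) 1, u x = φ x) →
        ∀ ε : ℝ, 0 < ε → ε ≤ ε₀ →
        (∀ x ∈ Qset ∩ ball (0:E2) 1, |u x - Pplus c x| ≤ ε) →
        (∀ x ∈ Qset ∩ ball (0:E2) 1, |f x - c| ≤ δ * ε) →
        (∀ x ∈ frontier Qset ∩ ball (0:E2) 1, |φ x - qfun x| ≤ δ * ε) →
        ∀ x ∈ Qset ∩ ball (0:E2) r, |u x - Pplus c x| ≤ ε * r ^ (2 + α) := by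
  obtain ⟨hc0, hc1⟩ := hc
  set s := √(1 - c) with hs
  have hs2 : s ^ 2 = 1 - c := Real.sq_sqrt (by linarith)
  have hs0 : 0 < s := Real.sqrt_pos.2 (by linarith)
  have hs1 : s < 1 := by nlinarith
  have hss : 0 < s ^ 2 := by positivity
  have hss1 : s ^ 2 < 1 := by linarith
  -- normalises the barrier to be at least `1` on `‖x‖ = 1/2`, where `hq (s / 4) x ≥ s / 16`
  set K : ℝ := ((s / 16) ^ (1 + s ^ 2 / 18))⁻¹ with hK
  have hK0 : 0 < K := inv_pos.2 (Real.rpow_pos_of_pos (by positivity) _)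
  have hα : 0 < s ^ 2 / 18 := by positivity
  -- the radius is chosen so that `K r ^ α ≤ 1/3`
  set r : ℝ := min (1/2) ((1 / (3 * K)) ^ (1 / (s ^ 2 / 18))) with hr
  have hr0 : 0 < r := lt_min (by norm_num) (Real.rpow_pos_of_pos (by positivity) _)
  have hr2 : r ≤ 1/2 := min_le_left _ _
  have hrα : K * r ^ (s ^ 2 / 18) ≤ 1 / 3 := by
    have : r ^ (s ^ 2 / 18) ≤ 1 / (3 * K) := by
      calc r ^ (s ^ 2 / 18) ≤ ((1 / (3 * K)) ^ (1 / (s ^ 2 / 18))) ^ (s ^ 2 / 18) :=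
            Real.rpow_le_rpow hr0.le (min_le_right _ _) hα.le
        _ = 1 / (3 * K) := by
            rw [← Real.rpow_mul (by positivity), one_div_mul_cancel hα.ne', Real.rpow_one]
    calc K * r ^ (s ^ 2 / 18) ≤ K * (1 / (3 * K)) := by gcongr
      _ = 1 / 3 := by field_simp
  set d : ℝ := r ^ (2 + s ^ 2 / 18) / 3 with hd
  have hrp0 : 0 < r ^ (2 + s ^ 2 / 18) := Real.rpow_pos_of_pos hr0 _
  have hrp1 : r ^ (2 + s ^ 2 / 18) ≤ 1 := Real.rpow_le_one hr0.le (by linarith) (by positivity)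
  have hd0 : 0 < d := by positivity
  have hd1 : d < 1 := by linarith
  have hsd : s * d < 1 := by nlinarith
  have hsd0 : 0 < s * d := by positivity
  set M : ℝ := 3 * K + 1 with hM
  have hM1 : 1 < M := by linarith
  have hMM : M < 4 * M ^ 2 := by nlinarith
  refine ⟨s * d / 4, ⟨by positivity, by linarith⟩, s * d / (4 * M ^ 2),
    ⟨by positivity, (div_lt_one (by positivity)).2 (by nlinarith)⟩, s ^ 2 / 18,
    ⟨hα, by linarith⟩, r, ⟨hr0, hr2⟩, ?_⟩
  intro u f φ hcont hconv hC2 hMA hφ ε hε hε0 hu hf hφq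
  have hεM2 : ε * M ^ 2 ≤ s * d / 4 := by
    calc ε * M ^ 2 ≤ s * d / (4 * M ^ 2) * M ^ 2 := by gcongr
      _ = s * d / 4 := by field_simp
  have hεM : ε * M < 1 := by nlinarith
  have hball : closure (ball (0:E2) 1) = closedBall 0 1 := closure_ball 0 one_ne_zero
  have hhalf : closure Qset ∩ closedBall (0:E2) (1/2) ⊆ closure Qset ∩ closure (ball (0:E2) 1) := by
    rw [hball]
    exact inter_subset_inter_right _ (closedBall_subset_closedBall (by norm_num))
  have hopen : IsOpen (Qset ∩ ball (0:E2) 1) := isOpen_Qset.inter isOpen_ball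
  have hhalf' : Qset ∩ ball (0:E2) (1/2) ⊆ Qset ∩ ball (0:E2) 1 :=
    inter_subset_inter_right _ (ball_subset_ball (by norm_num))
  have hm0 : (0:ℝ) ≤ 1 + s ^ 2 / 18 := by positivity
  have hcontP := continuous_Pplus c
  have hcontψ := continuous_psi (η := s / 4) (K := K) (d := d) (δ := s * d / 4) hm0
  set ψ : E2 → ℝ := psi (s / 4) K (1 + s ^ 2 / 18) d (s * d / 4) with hψ
  -- the flatness bound extends by continuity to the points of `closure Qset` in the unit ball
  have habs : ∀ x ∈ closure (Qset ∩ ball (0:E2) 1), |u x - Pplus c x| ≤ ε :=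
    le_on_closure hu
      (((hcont.mono closure_inter_subset).sub hcontP.continuousOn).abs) continuousOn_const
  have hψ0 : ∀ x ∈ closure Qset, s * d / 4 ≤ ψ x := by
    intro x hx
    obtain ⟨h0, h1⟩ := nonneg_of_mem_closure hx
    have h := (mul_nonneg (by positivity) (sq_nonneg ‖x‖)).trans (hq_lower (η := s / 4) h0 h1)
    have := mul_nonneg hK0.le (Real.rpow_nonneg h (1 + s ^ 2 / 18))
    have := mul_nonneg hd0.le h
    simp only [hψ, psi]
    linarith
  have hsph : ∀ x ∈ closure Qset, ‖x‖ = 1/2 → |u x - Pplus c x| ≤ ε * ψ x := by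
    intro x hx hn
    have hxc : x ∈ closure (Qset ∩ ball (0:E2) 1) :=
      isOpen_ball.closure_inter ⟨hx, mem_ball_zero_iff.2 (by rw [hn]; norm_num)⟩
    refine (habs x hxc).trans (le_mul_of_one_le_right hε.le ?_)
    obtain ⟨h0, h1⟩ := nonneg_of_mem_closure hx
    have h := hq_lower (η := s / 4) h0 h1
    rw [hn] at h
    have h' : s / 16 ≤ hq (s / 4) x := by linarith
    have h3 : 1 ≤ K * hq (s / 4) x ^ (1 + s ^ 2 / 18) := by
      rw [hK, ← div_eq_inv_mul, one_le_div (Real.rpow_pos_of_pos (by positivity) _)]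
      exact Real.rpow_le_rpow (by positivity) h' hm0
    have := mul_nonneg hd0.le ((by positivity : 0 ≤ s / 16).trans h')
    simp only [hψ, psi]
    linarith
  have hbd : ∀ x ∈ frontier Qset, ‖x‖ < 1/2 → |u x - Pplus c x| ≤ ε * ψ x := by
    intro x hx hn
    have hxb : x ∈ frontier Qset ∩ ball (0:E2) 1 := ⟨hx, mem_ball_zero_iff.2 (by linarith)⟩
    have hP : Pplus c x = qfun x := by
      rw [Pplus, qfun, norm_sq_coords, mul_eq_zero_of_mem_frontier hx]; ring
    rw [hφ x hxb, hP, mul_comm ε]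
    exact (hφq x hxb).trans
      (mul_le_mul_of_nonneg_right (hψ0 x (frontier_subset_closure hx)) hε.le)
  have hcontK (σ : ℝ) : ContinuousOn (fun y => u y - (Pplus c y + σ * ψ y))
      (closure Qset ∩ closedBall (0:E2) (1/2)) :=
    (hcont.mono hhalf).sub (hcontP.add (continuous_const.mul hcontψ)).continuousOn
  have hpt : ∀ x ∈ Qset ∩ ball (0:E2) (1/2),
      HasLineHess u x (pd2 0 0 u x) (pd2 0 1 u x) (pd2 1 1 u x) := fun x hx =>
    hasLineHess_of_contDiffAt (hC2.contDiffAt (hopen.mem_nhds (hhalf' hx)))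
  have hupper : ∀ x ∈ Qset ∩ ball (0:E2) (1/2), u x - (Pplus c x + ε * ψ x) ≤ 0 := by
    refine max_principle (hcontK ε) ?_ ?_ ?_
    · intro x hx hmax
      have hx1 := hhalf' hx
      obtain ⟨⟨h00, h00'⟩, ⟨h11, h11'⟩, ⟨h01, h01'⟩, hL⟩ :=
        psi_hess hs0 hs1 hK0.le hd0.le hd1.le hx.1 (mem_ball_zero_iff.1 hx1.2).le
      have hdet := det_mono
        (form_nonneg_of_convexOn (hpt x hx) (hopen.mem_nhds hx1)
          (hconv.subset (inter_subset_inter subset_closure subset_closure)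
            ((convex_Qset).inter (convex_ball _ _))))
        (form_le_of_isLocalMax (hpt x hx)
          (hasLineHess_barrier c ε (s / 4) K (1 + s ^ 2 / 18) d (s * d / 4) (hq_pos hs0 hx.1))
          hmax)
      have hfx := abs_le.1 (hf x hx1)
      rw [← hMA x hx1, MA] at hfx
      rw [← hs] at hdet
      have := det_upper h00 h00' h11 h11' hL hε (by linarith) hεM2 hs2
      linarith
    · intro x hx hn
      have := (abs_le.1 (hsph x hx hn)).2
      linarith
    · intro x hx hn
      have := (abs_le.1 (hbd x hx hn)).2
      linarith
  have hlower : ∀ x ∈ Qset ∩ ball (0:E2) (1/2), -(u x - (Pplus c x + -ε * ψ x)) ≤ 0 := by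
    refine max_principle (hcontK (-ε)).neg ?_ ?_ ?_
    · intro x hx hmax
      have hx1 := hhalf' hx
      obtain ⟨⟨h00, h00'⟩, ⟨h11, h11'⟩, ⟨h01, h01'⟩, hL⟩ :=
        psi_hess hs0 hs1 hK0.le hd0.le hd1.le hx.1 (mem_ball_zero_iff.1 hx1.2).le
      have hlow := det_lower h00 h00' h11 h01 h01' hL hε (by linarith) hεM2 hs2
      have hW0 : 0 < 1 + -ε * psi00 (s / 4) K (1 + s ^ 2 / 18) d x := by
        have := mul_le_mul_of_nonneg_left h00' hε.le
        linarith
      have hdet := det_mono (form_nonneg_of_det hW0 (by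
          have := mul_pos hε hsd0
          linarith))
        (form_le_of_isLocalMax
          (hasLineHess_barrier c (-ε) (s / 4) K (1 + s ^ 2 / 18) d (s * d / 4) (hq_pos hs0 hx.1))
          (hpt x hx) (by simpa only [neg_sub] using hmax))
      have hfx := abs_le.1 (hf x hx1)
      rw [← hMA x hx1, MA] at hfx
      linarith
    · intro x hx hn
      have := (abs_le.1 (hsph x hx hn)).1
      linarith
    · intro x hx hn
      have := (abs_le.1 (hbd x hx hn)).1
      linarith
  intro x hx
  have hxr : ‖x‖ < r := mem_ball_zero_iff.1 hx.2
  have hxh : x ∈ Qset ∩ ball (0:E2) (1/2) := ⟨hx.1, mem_ball_zero_iff.2 (by linarith)⟩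
  have hψr : ψ x ≤ r ^ (2 + s ^ 2 / 18) := by
    have hh := hq_pos hs0 hx.1
    have h1 : hq (s / 4) x ≤ r ^ 2 :=
      (hq_upper (by linarith) x).trans (by gcongr)
    have h2 : hq (s / 4) x ≤ 1 := h1.trans (by nlinarith)
    have h3 : K * hq (s / 4) x ^ (1 + s ^ 2 / 18) ≤ r ^ (2 + s ^ 2 / 18) / 3 := by
      calc K * hq (s / 4) x ^ (1 + s ^ 2 / 18) ≤ K * (r ^ 2) ^ (1 + s ^ 2 / 18) := by
            gcongr
        _ = (K * r ^ (s ^ 2 / 18)) * r ^ (2 + s ^ 2 / 18) := by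
            rw [← Real.rpow_natCast r 2, ← Real.rpow_mul hr0.le, mul_assoc, ← Real.rpow_add hr0]
            congr 2; push_cast; ring
        _ ≤ 1 / 3 * r ^ (2 + s ^ 2 / 18) := by gcongr
        _ = r ^ (2 + s ^ 2 / 18) / 3 := by ring
    have h4 : d * hq (s / 4) x ≤ d := mul_le_of_le_one_right hd0.le h2
    have h5 : s * d ≤ d := mul_le_of_le_one_left hd0.le hs1.le
    simp only [hψ, psi]
    linarith
  have h1 := hupper x hxh
  have h2 := hlower x hxh
  have h3 := mul_le_mul_of_nonneg_left hψr hε.le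
  exact abs_le.2 ⟨by linarith, by linarith⟩
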